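/- arXiv:2111.00567 — 3 statements merged into one kernel-verified Lean document; each statement's English description precedes it below -/
import Mathlib

section
/- Let n ≥ 1 be an integer, q ∈ (0,1), and let M, j be integers with 1 ≤ M < j ≤ n. Under the Mallows distribution P_n^q on S_n, the probability that the maximum of the first j−1 values equals the maximum of the first M values is P_n^q(max(σ_1,…,σ_{j−1}) = max(σ_1,…,σ_M)) = q^{j−1−M} (1 − q^M)/(1 − q^{j−1}). -/
open Finset Filter

/-- The number of inversions of a permutation of `Fin n`. -/
def invCount (n : ℕ) (σ : Equiv.Perm (Fin n)) : ℕ :=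
  (Finset.univ.filter (fun p : Fin n × Fin n => p.1 < p.2 ∧ σ p.2 < σ p.1)).card

/-- Normalization constant of the Mallows distribution:
`Z_n(q) = ∑_{σ ∈ S_n} q^{inv σ}`. -/
noncomputable def mallowsZ (n : ℕ) (q : ℝ) : ℝ :=
  ∑ σ : Equiv.Perm (Fin n), q ^ invCount n σ

/-- The Mallows probability of a set `A` of permutations:
`P_n^q(A) = (∑_{σ ∈ A} q^{inv σ}) / Z_n(q)`. -/
noncomputable def mallowsProb (n : ℕ) (q : ℝ) (A : Finset (Equiv.Perm (Fin n))) : ℝ :=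
  (∑ σ ∈ A, q ^ invCount n σ) / mallowsZ n q

/-- The success event for the strategy `S(n,M)`.  Positions are indexed by `Fin n`
(the index `i : Fin n` represents the `(i+1)`-st arriving item) and ranks are the
values of `σ` (the value `n-1`, i.e. the top of `Fin n`, represents the highest
rank `n`).  For `M ≥ 1` the strategy succeeds iff for some position `j` with
`(j:ℕ) ≥ M` (i.e. item number `j+1 ≥ M+1`) the item at position `j` has the top
rank and the maximum rank among the items strictly before position `j` equals the
maximum rank among the first `M` items.  For `M = 0` it succeeds iff the first
item has top rank. -/
def winEvent (n M : ℕ) : Finset (Equiv.Perm (Fin n)) :=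
  if M = 0 then
    Finset.univ.filter (fun σ => ∀ i : Fin n, (i : ℕ) = 0 → (σ i : ℕ) = n - 1)
  else
    Finset.univ.filter (fun σ => ∃ j : Fin n, M ≤ (j : ℕ) ∧ (σ j : ℕ) = n - 1 ∧
      (Finset.univ.filter (fun i : Fin n => i < j)).sup (fun i => (σ i : ℕ)) =
      (Finset.univ.filter (fun i : Fin n => (i : ℕ) < M)).sup (fun i => (σ i : ℕ)))

/-- `𝒫_n^q(S(n,M))`, the success probability of the strategy `S(n,M)` under the
Mallows distribution with parameter `q`. -/
noncomputable def succProb (n M : ℕ) (q : ℝ) : ℝ := mallowsProb n q (winEvent n M)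

lemma invCount_swap (n : ℕ) (σ : Equiv.Perm (Fin n)) (a b : Fin n) (hab : (b : ℕ) = a + 1)
    (h : σ b < σ a) : invCount n σ = invCount n (σ * Equiv.swap a b) + 1 := by
  classical
  unfold invCount
  have hmem : (a, b) ∈ (Finset.univ.filter
      (fun p : Fin n × Fin n => p.1 < p.2 ∧ σ p.2 < σ p.1)) := by
    simp only [Finset.mem_filter, Finset.mem_univ, true_and]
    exact ⟨by rw [Fin.lt_def]; omega, h⟩
  rw [← Finset.card_erase_add_one hmem]
  congr 1
  have key : ∀ x y : Fin n, x < y → ¬ (x = a ∧ y = b) → Equiv.swap a b x < Equiv.swap a b y := by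
    intro x y hxy hne
    simp only [Equiv.swap_apply_def]
    split_ifs <;> simp only [Fin.lt_def, Fin.ext_iff] at * <;> omega
  refine Finset.card_nbij' (fun p => (Equiv.swap a b p.1, Equiv.swap a b p.2))
    (fun p => (Equiv.swap a b p.1, Equiv.swap a b p.2)) ?_ ?_ ?_ ?_
  · rintro ⟨x, y⟩ hp
    simp only [Finset.mem_coe, Finset.mem_erase, Finset.mem_filter, Finset.mem_univ, true_and, ne_eq,
      Prod.mk.injEq] at hp ⊢
    refine ⟨key x y hp.2.1 hp.1, ?_⟩
    simpa using hp.2.2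
  · rintro ⟨x, y⟩ hp
    simp only [Finset.mem_coe, Finset.mem_erase, Finset.mem_filter, Finset.mem_univ, true_and, ne_eq,
      Prod.mk.injEq] at hp ⊢
    simp only [Equiv.Perm.mul_apply] at hp
    obtain ⟨hxy, hs⟩ := hp
    refine ⟨?_, key x y hxy ?_, hs⟩
    rotate_left
    · rintro ⟨rfl, rfl⟩
      simp only [Equiv.swap_apply_left, Equiv.swap_apply_right] at hs
      exact absurd hs (not_lt.mpr h.le)
    · rintro ⟨h1, h2⟩
      have h1' : x = b := by
        have := congrArg (Equiv.swap a b) h1; simpa using this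
      have h2' : y = a := by
        have := congrArg (Equiv.swap a b) h2; simpa using this
      subst h1' h2'
      rw [Fin.lt_def] at hxy; omega
  · rintro ⟨x, y⟩ _; simp
  · rintro ⟨x, y⟩ _; simp

/-- total weight of permutations whose maximum over the first `m` positions is at position `k` -/
noncomputable def argW (n m : ℕ) (q : ℝ) (k : ℕ) : ℝ :=
  open Classical in
  ∑ σ ∈ Finset.univ.filter (fun σ : Equiv.Perm (Fin n) =>
    ∃ a : Fin n, (a : ℕ) = k ∧ ∀ i : Fin n, (i : ℕ) < m → σ i ≤ σ a), q ^ invCount n σ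

lemma argW_succ (n m : ℕ) (q : ℝ) (k : ℕ) (hk : k + 1 < m) (hm : m ≤ n) :
    argW n m q k = q * argW n m q (k + 1) := by
  classical
  unfold argW
  rw [Finset.mul_sum]
  let a : Fin n := ⟨k, by omega⟩
  let b : Fin n := ⟨k + 1, by omega⟩
  have hsw : ∀ i : Fin n, (i : ℕ) < m → ((Equiv.swap a b i : Fin n) : ℕ) < m := by
    intro i hi
    simp only [Equiv.swap_apply_def]
    split_ifs <;> first | exact hi | (simp only [a, b]; omega)
  refine Finset.sum_nbij' (fun σ => σ * Equiv.swap a b) (fun σ => σ * Equiv.swap a b) ?_ ?_ ?_ ?_ ?_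
  · intro σ hσ
    simp only [Finset.mem_filter, Finset.mem_univ, true_and, Equiv.Perm.mul_apply] at hσ ⊢
    obtain ⟨a', ha', h⟩ := hσ
    obtain rfl : a' = a := Fin.ext ha'
    refine ⟨b, rfl, fun i hi => ?_⟩
    rw [Equiv.swap_apply_right]
    exact h _ (hsw i hi)
  · intro σ hσ
    simp only [Finset.mem_filter, Finset.mem_univ, true_and, Equiv.Perm.mul_apply] at hσ ⊢
    obtain ⟨a', ha', h⟩ := hσ
    obtain rfl : a' = b := Fin.ext ha'
    refine ⟨a, rfl, fun i hi => ?_⟩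
    rw [Equiv.swap_apply_left]
    exact h _ (hsw i hi)
  · intro σ _; simp [mul_assoc]
  · intro σ _; simp [mul_assoc]
  · intro σ hσ
    simp only [Finset.mem_filter, Finset.mem_univ, true_and] at hσ
    obtain ⟨a', ha', h⟩ := hσ
    obtain rfl : a' = a := Fin.ext ha'
    have hlt : σ b < σ a := by
      refine lt_of_le_of_ne (h b hk) fun he => ?_
      have := congrArg Fin.val (σ.injective he)
      simp [a, b] at this
    rw [invCount_swap n σ a b rfl hlt, pow_succ, mul_comm]

lemma argW_eq (n m : ℕ) (q : ℝ) (hm : m ≤ n) (d k : ℕ) (hk : k + d + 1 = m) :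
    argW n m q k = q ^ d * argW n m q (m - 1) := by
  induction d generalizing k with
  | zero => simp [← hk]
  | succ d ih =>
    rw [argW_succ n m q k (by omega) hm, ih (k + 1) (by omega), pow_succ]; ring

lemma sum_argW (n m : ℕ) (q : ℝ) (M : ℕ) (hMm : M ≤ m) (A : Finset (Equiv.Perm (Fin n)))
    (hA : ∀ σ, σ ∈ A ↔ ∃ a : Fin n, (a : ℕ) < M ∧ ∀ i : Fin n, (i : ℕ) < m → σ i ≤ σ a) :
    ∑ σ ∈ A, q ^ invCount n σ = ∑ k ∈ Finset.range M, argW n m q k := by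
  classical
  unfold argW
  rw [← Finset.sum_biUnion]
  · refine Finset.sum_congr ?_ fun _ _ => rfl
    ext σ
    rw [hA]
    simp only [Finset.mem_biUnion, Finset.mem_range, Finset.mem_filter, Finset.mem_univ, true_and]
    constructor
    · rintro ⟨a, ha, h⟩; exact ⟨a, ha, a, rfl, h⟩
    · rintro ⟨k, hk, a, rfl, h⟩; exact ⟨a, hk, h⟩
  · intro x hx y hy hxy
    simp only [Finset.coe_range, Set.mem_Iio] at hx hy
    rw [Function.onFun, Finset.disjoint_left]
    intro σ h1 h2
    simp only [Finset.mem_filter, Finset.mem_univ, true_and] at h1 h2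
    obtain ⟨a, rfl, ha⟩ := h1
    obtain ⟨b, rfl, hb⟩ := h2
    exact hxy (congrArg Fin.val (σ.injective
      (le_antisymm (hb a (by omega)) (ha b (by omega)))))

lemma geom_argW (n m : ℕ) (q : ℝ) (M : ℕ) (hMm : M ≤ m) (hm : m ≤ n) :
    (∑ k ∈ Finset.range M, argW n m q k) * (1 - q) =
      q ^ (m - M) * (1 - q ^ M) * argW n m q (m - 1) := by
  induction M with
  | zero => simp
  | succ M ih =>
    rw [Finset.sum_range_succ, add_mul, ih (by omega),
      argW_eq n m q hm (m - (M + 1)) M (by omega),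
      show m - M = (m - (M + 1)) + 1 by omega]
    ring

lemma event_iff (n m M : ℕ) (hM : 1 ≤ M) (hMm : M ≤ m) (hm : m ≤ n) (σ : Equiv.Perm (Fin n)) :
    ((Finset.univ.filter (fun i : Fin n => (i : ℕ) < m)).sup (fun i => (σ i : ℕ)) =
        (Finset.univ.filter (fun i : Fin n => (i : ℕ) < M)).sup (fun i => (σ i : ℕ))) ↔
    ∃ a : Fin n, (a : ℕ) < M ∧ ∀ i : Fin n, (i : ℕ) < m → σ i ≤ σ a := by
  constructor
  · intro h
    obtain ⟨a, ha, he⟩ := Finset.exists_mem_eq_sup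
      (Finset.univ.filter (fun i : Fin n => (i : ℕ) < M))
      ⟨⟨0, by omega⟩, by simp; omega⟩ (fun i => (σ i : ℕ))
    refine ⟨a, by simpa using ha, fun i hi => ?_⟩
    rw [Fin.le_def]
    have : (σ i : ℕ) ≤ _ := Finset.le_sup (f := fun i => (σ i : ℕ))
      (show i ∈ Finset.univ.filter (fun i : Fin n => (i : ℕ) < m) by simpa using hi)
    rw [h, he] at this
    exact this
  · rintro ⟨a, ha, h⟩
    apply le_antisymm
    · refine Finset.sup_le fun i hi => ?_
      refine le_trans (h i (by simpa using hi)) ?_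
      exact Finset.le_sup (f := fun i => (σ i : ℕ))
        (show a ∈ Finset.univ.filter (fun i : Fin n => (i : ℕ) < M) by simpa using ha)
    · refine Finset.sup_mono fun i hi => ?_
      simp only [Finset.mem_filter, Finset.mem_univ, true_and] at hi ⊢
      omega

theorem stmt_16 (n M j : ℕ) (q : ℝ) (hq : q ∈ Set.Ioo (0 : ℝ) 1)
    (hM : 1 ≤ M) (hMj : M < j) (hj : j ≤ n) :
    mallowsProb n q (Finset.univ.filter (fun σ : Equiv.Perm (Fin n) =>
        (Finset.univ.filter (fun i : Fin n => (i : ℕ) + 1 < j)).sup (fun i => (σ i : ℕ)) =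
        (Finset.univ.filter (fun i : Fin n => (i : ℕ) < M)).sup (fun i => (σ i : ℕ)))) =
      q ^ (j - 1 - M) * (1 - q ^ M) / (1 - q ^ (j - 1)) := by
  obtain ⟨m, rfl⟩ : ∃ m, j = m + 1 := ⟨j - 1, by omega⟩
  obtain ⟨h0, h1⟩ := hq
  simp only [Nat.add_lt_add_iff_right, Nat.add_sub_cancel]
  have hmn : m ≤ n := by omega
  have hMm : M ≤ m := by omega
  have hnum := sum_argW n m q M hMm (Finset.univ.filter (fun σ : Equiv.Perm (Fin n) =>
        (Finset.univ.filter (fun i : Fin n => (i : ℕ) < m)).sup (fun i => (σ i : ℕ)) =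
        (Finset.univ.filter (fun i : Fin n => (i : ℕ) < M)).sup (fun i => (σ i : ℕ))))
    (fun σ => by
      rw [Finset.mem_filter]
      simpa using event_iff n m M hM hMm hmn σ)
  have hden := sum_argW n m q m le_rfl Finset.univ
    (fun σ => by
      simpa using event_iff n m m (by omega) le_rfl hmn σ)
  have g1 := geom_argW n m q M hMm hmn
  have g2 := geom_argW n m q m le_rfl hmn
  rw [← hnum] at g1
  rw [← hden] at g2
  have hZ : 0 < ∑ σ : Equiv.Perm (Fin n), q ^ invCount n σ :=
    Finset.sum_pos (fun σ _ => pow_pos h0 _) ⟨1, Finset.mem_univ _⟩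
  have hqm : q ^ m < 1 := pow_lt_one₀ h0.le h1 (by omega)
  have hq1 : (1 - q) ≠ 0 := by linarith
  unfold mallowsProb mallowsZ
  rw [div_eq_div_iff hZ.ne' (by linarith)]
  apply mul_right_cancel₀ hq1
  simp only [Nat.sub_self, pow_zero, one_mul] at g2
  linear_combination (1 - q ^ m) * g1 - q ^ (m - M) * (1 - q ^ M) * g2
end

section
/- Let n ≥ 1 be an integer, q ∈ (0,1), and let M, j be integers with 1 ≤ M < j ≤ n. Under the Mallows distribution P_n^q on S_n, the events {σ_j = n} and {max(σ_1,…,σ_{j−1}) = max(σ_1,…,σ_M)} are independent; equivalently, P_n^q(σ_j = n and max(σ_1,…,σ_{j−1}) = max(σ_1,…,σ_M)) = ((1−q) q^{n−j}/(1 − q^n)) · (q^{j−1−M} (1 − q^M)/(1 − q^{j−1})). -/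
open Finset Filter

/-- Insert the maximal value at position `p`. -/
def insPerm (n : ℕ) (p : Fin (n+1)) (τ : Equiv.Perm (Fin n)) : Equiv.Perm (Fin (n+1)) :=
  ((finSuccEquiv' p).trans (Equiv.optionCongr τ)).trans (finSuccEquiv' (Fin.last n)).symm

theorem insPerm_at (n : ℕ) (p : Fin (n+1)) (τ : Equiv.Perm (Fin n)) :
    insPerm n p τ p = Fin.last n := by
  simp [insPerm]

theorem insPerm_succAbove (n : ℕ) (p : Fin (n+1)) (τ : Equiv.Perm (Fin n)) (i : Fin n) :
    insPerm n p τ (p.succAbove i) = (τ i).castSucc := by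
  simp [insPerm]

theorem insPerm_bij (n : ℕ) :
    Function.Bijective (fun x : Fin (n+1) × Equiv.Perm (Fin n) => insPerm n x.1 x.2) := by
  rw [Fintype.bijective_iff_injective_and_card]
  constructor
  · rintro ⟨p, τ⟩ ⟨p', τ'⟩ h
    simp only at h
    have hp : p = p' := by
      apply (insPerm n p τ).injective
      rw [insPerm_at, h, insPerm_at]
    subst hp
    have : τ = τ' := by
      ext i
      have h2 := congrArg (fun s => s (p.succAbove i)) h
      simp only [insPerm_succAbove] at h2
      exact congrArg Fin.val (Fin.castSucc_injective _ h2)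
    rw [this]
  · simp [Fintype.card_perm, Nat.factorial_succ]

theorem sum_insPerm (n : ℕ) (f : Equiv.Perm (Fin (n+1)) → ℝ) :
    ∑ σ, f σ = ∑ p : Fin (n+1), ∑ τ : Equiv.Perm (Fin n), f (insPerm n p τ) := by
  rw [← Fintype.sum_prod_type']
  exact ((insPerm_bij n).sum_comp f).symm

theorem invCount_eq (n : ℕ) (σ : Equiv.Perm (Fin n)) :
    invCount n σ = ∑ i, ∑ j, if i < j ∧ σ j < σ i then 1 else 0 := by
  rw [invCount, Finset.card_filter, Fintype.sum_prod_type]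

theorem invCount_insPerm (n : ℕ) (p : Fin (n+1)) (τ : Equiv.Perm (Fin n)) :
    invCount (n+1) (insPerm n p τ) = (n - p) + invCount n τ := by
  rw [invCount_eq, invCount_eq, Fin.sum_univ_succAbove _ p]
  congr 1
  · rw [Fin.sum_univ_succAbove _ p]
    simp only [insPerm_at, insPerm_succAbove, Fin.castSucc_lt_last, and_true, lt_irrefl,
      if_false, zero_add, Fin.lt_succAbove_iff_le_castSucc]
    rw [← Finset.card_filter]
    have : ∀ i : Fin n, p ≤ i.castSucc ↔ (p : ℕ) ≤ i := fun i => Iff.rfl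
    simp only [this]
    rw [Finset.card_filter, Fin.sum_univ_eq_sum_range (fun i => if (p:ℕ) ≤ i then 1 else 0),
      ← Finset.card_filter]
    have : (Finset.range n).filter (fun i => (p:ℕ) ≤ i) = Finset.Ico (p:ℕ) n := by
      ext; simp; omega
    rw [this, Nat.card_Ico]; simp
  · refine Finset.sum_congr rfl fun i _ => ?_
    rw [Fin.sum_univ_succAbove _ p]
    have hlast : ¬ (Fin.last n < (τ i).castSucc) := not_lt.2 (Fin.le_last _)
    simp [insPerm_at, insPerm_succAbove, hlast, Fin.succAbove_lt_succAbove_iff]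

/-- The maximum of the first `k` values is attained among the first `M`. -/
def evMax (n k M : ℕ) (σ : Equiv.Perm (Fin n)) : Prop :=
  ∀ i : Fin n, (i : ℕ) < k → ∃ i' : Fin n, (i' : ℕ) < M ∧ σ i ≤ σ i'

theorem evMax_iff (n k M : ℕ) (hM : 1 ≤ M) (hMk : M ≤ k) (hk : k ≤ n)
    (σ : Equiv.Perm (Fin n)) :
    (Finset.univ.filter (fun i : Fin n => (i : ℕ) < k)).sup (fun i => (σ i : ℕ)) =
    (Finset.univ.filter (fun i : Fin n => (i : ℕ) < M)).sup (fun i => (σ i : ℕ)) ↔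
    evMax n k M σ := by
  constructor
  · intro h i hi
    have hne : (Finset.univ.filter (fun i : Fin n => (i : ℕ) < M)).Nonempty :=
      ⟨⟨0, by omega⟩, by simp; omega⟩
    obtain ⟨i', hi', he⟩ := Finset.exists_mem_eq_sup _ hne (fun i => (σ i : ℕ))
    refine ⟨i', (Finset.mem_filter.1 hi').2, ?_⟩
    rw [Fin.le_def, ← he, ← h]
    exact Finset.le_sup (f := fun i => (σ i : ℕ)) (by simpa using hi)
  · intro h
    apply le_antisymm
    · refine Finset.sup_le fun i hi => ?_
      obtain ⟨i', h1, h2⟩ := h i (Finset.mem_filter.1 hi).2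
      exact le_trans (Fin.le_def.1 h2)
        (Finset.le_sup (f := fun i => (σ i : ℕ)) (by simpa using h1))
    · apply Finset.sup_mono
      intro i hi
      simp at hi ⊢
      omega

theorem evMax_ins_lt (n k M : ℕ) (p : Fin (n+1)) (hp : (p : ℕ) < M)
    (τ : Equiv.Perm (Fin n)) : evMax (n+1) k M (insPerm n p τ) := by
  intro i _
  exact ⟨p, hp, by rw [insPerm_at]; exact Fin.le_last _⟩

theorem evMax_ins_mid (n k M : ℕ) (p : Fin (n+1)) (hp : M ≤ (p : ℕ)) (hpk : (p : ℕ) < k)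
    (τ : Equiv.Perm (Fin n)) : ¬ evMax (n+1) k M (insPerm n p τ) := by
  intro h
  obtain ⟨i', h1, h2⟩ := h p hpk
  rw [insPerm_at, Fin.last_le_iff, ← insPerm_at n p τ] at h2
  have := (insPerm n p τ).injective h2
  subst this
  omega

theorem evMax_ins_ge (n k M : ℕ) (hMk : M ≤ k) (p : Fin (n+1)) (hpk : k ≤ (p : ℕ))
    (τ : Equiv.Perm (Fin n)) : evMax (n+1) k M (insPerm n p τ) ↔ evMax n k M τ := by
  have key : ∀ i : Fin (n+1), (i : ℕ) < k → ∃ i₀ : Fin n, (i₀ : ℕ) = i ∧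
      i = p.succAbove i₀ := by
    intro i hi
    have hpn := p.2
    refine ⟨⟨i, by omega⟩, rfl, ?_⟩
    rw [Fin.succAbove_of_castSucc_lt]
    · rfl
    · rw [Fin.lt_def]; simp; omega
  have key2 : ∀ i : Fin n, (i : ℕ) < k → ((p.succAbove i : Fin (n+1)) : ℕ) = i := by
    intro i hi
    rw [Fin.succAbove_of_castSucc_lt]
    · rfl
    · rw [Fin.lt_def]; simp; omega
  constructor
  · intro h i hi
    obtain ⟨i', h1, h2⟩ := h (p.succAbove i) (by rw [key2 i hi]; exact hi)
    obtain ⟨i₀, h3, h4⟩ := key i' (by omega)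
    rw [h4, insPerm_succAbove, insPerm_succAbove, Fin.castSucc_le_castSucc_iff] at h2
    exact ⟨i₀, by omega, h2⟩
  · intro h i hi
    obtain ⟨i₀, h3, h4⟩ := key i hi
    obtain ⟨i', h1, h2⟩ := h i₀ (by omega)
    refine ⟨p.succAbove i', by rw [key2 i' (by omega)]; exact h1, ?_⟩
    rw [h4, insPerm_succAbove, insPerm_succAbove, Fin.castSucc_le_castSucc_iff]
    exact h2

theorem geom_aux (q a b : ℝ) (M k : ℕ) (hMk : M ≤ k) (N : ℕ) :
    (1 - q) * ∑ p ∈ Finset.range N, q ^ (N - 1 - p) *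
      (if p < M then a else if p < k then 0 else b) =
    q ^ (N - M) * (1 - q ^ (min N M)) * a + (1 - q ^ (N - k)) * b := by
  induction N with
  | zero => simp
  | succ N ih =>
    rw [Finset.sum_range_succ]
    have : ∑ p ∈ Finset.range N, q ^ (N + 1 - 1 - p) *
        (if p < M then a else if p < k then 0 else b) =
        q * ∑ p ∈ Finset.range N, q ^ (N - 1 - p) *
        (if p < M then a else if p < k then 0 else b) := by
      rw [Finset.mul_sum]
      refine Finset.sum_congr rfl fun p hp => ?_
      have hp' := Finset.mem_range.1 hp
      rw [show N + 1 - 1 - p = (N - 1 - p) + 1 by omega, pow_succ]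
      ring
    rw [this, mul_add, mul_left_comm, ih]
    by_cases h1 : N < M
    · have h2 : N + 1 - M = 0 := by omega
      have h3 : N - M = 0 := by omega
      have h4 : N + 1 - k = 0 := by omega
      have h5 : N - k = 0 := by omega
      have h6 : min (N+1) M = N + 1 := by omega
      have h7 : min N M = N := by omega
      simp [h1, h2, h3, h4, h5, h6, h7]
      ring
    · have h2 : N + 1 - M = (N - M) + 1 := by omega
      have h6 : min (N+1) M = M := by omega
      have h7 : min N M = M := by omega
      by_cases h8 : N < k
      · have h4 : N + 1 - k = 0 := by omega
        have h5 : N - k = 0 := by omega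
        simp [h1, h2, h4, h5, h6, h7, h8]
        ring
      · have h4 : N + 1 - k = (N - k) + 1 := by omega
        simp [h1, h2, h4, h6, h7, h8]
        ring

open Classical in
/-- Partial partition function over `evMax`. -/
noncomputable def evSum (n k M : ℕ) (q : ℝ) : ℝ :=
  ∑ σ : Equiv.Perm (Fin n), if evMax n k M σ then q ^ invCount n σ else 0

theorem evSum_rec (n k M : ℕ) (hMk : M ≤ k) (q : ℝ) :
    (1 - q) * evSum (n+1) k M q = q ^ (n + 1 - M) * (1 - q ^ (min (n+1) M)) * mallowsZ n q
      + (1 - q ^ (n + 1 - k)) * evSum n k M q := by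
  classical
  rw [← geom_aux q _ _ M k hMk (n+1), evSum, sum_insPerm,
    ← Fin.sum_univ_eq_sum_range (fun p => q ^ (n + 1 - 1 - p) *
      (if p < M then mallowsZ n q else if p < k then 0 else evSum n k M q))]
  congr 1
  refine Finset.sum_congr rfl fun p _ => ?_
  simp only [invCount_insPerm, pow_add, Nat.add_sub_cancel]
  by_cases h1 : (p : ℕ) < M
  · simp only [evMax_ins_lt n k M p h1, if_true, h1, mallowsZ, Finset.mul_sum]
  · by_cases h2 : (p : ℕ) < k
    · simp [evMax_ins_mid n k M p (by omega) h2, h1, h2]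
    · simp only [evMax_ins_ge n k M hMk p (by omega), h1, h2, if_false, evSum, Finset.mul_sum,
        mul_ite, mul_zero]

theorem mallowsZ_rec (n : ℕ) (q : ℝ) :
    (1 - q) * mallowsZ (n+1) q = (1 - q ^ (n+1)) * mallowsZ n q := by
  have h := evSum_rec n 0 0 le_rfl q
  have h2 : ∀ m, evSum m 0 0 q = mallowsZ m q := by
    intro m
    simp [evSum, mallowsZ, evMax]
  simpa [h2] using h

theorem evSum_eq (k M : ℕ) (hM : 1 ≤ M) (hMk : M ≤ k) (q : ℝ) (hq1 : q < 1) (n : ℕ)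
    (hk : k ≤ n) :
    (1 - q ^ k) * evSum n k M q = q ^ (k - M) * (1 - q ^ M) * mallowsZ n q := by
  induction n with
  | zero => omega
  | succ n ih =>
    have h1 := evSum_rec n k M hMk q
    have h2 := mallowsZ_rec n q
    have hne : (1 - q) ≠ 0 := by linarith
    rw [min_eq_right (by omega)] at h1
    apply mul_left_cancel₀ hne
    rcases Nat.lt_or_ge n k with h | h
    · have hkn : k = n + 1 := by omega
      subst hkn
      simp only [Nat.sub_self, pow_zero, sub_self, zero_mul, add_zero] at h1
      linear_combination (1 - q ^ (n+1)) * h1 - q ^ (n + 1 - M) * (1 - q ^ M) * h2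
    · have h3 := ih h
      obtain ⟨d, rfl⟩ := Nat.exists_eq_add_of_le h
      obtain ⟨e, rfl⟩ := Nat.exists_eq_add_of_le hMk
      rw [show M + e + d + 1 - M = e + (d + 1) by omega,
        show M + e + d + 1 - (M + e) = d + 1 by omega] at h1
      rw [show M + e - M = e by omega] at h3 ⊢
      linear_combination (1 - q ^ (M + e)) * h1 + (1 - q ^ (d+1)) * h3
        - q ^ e * (1 - q ^ M) * h2

theorem stmt_18 (n M j : ℕ) (q : ℝ) (hq : q ∈ Set.Ioo (0 : ℝ) 1)
    (hM : 1 ≤ M) (hMj : M < j) (hj : j ≤ n) :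
    mallowsProb n q (Finset.univ.filter (fun σ : Equiv.Perm (Fin n) =>
        (∃ i : Fin n, (i : ℕ) + 1 = j ∧ (σ i : ℕ) = n - 1) ∧
        (Finset.univ.filter (fun i : Fin n => (i : ℕ) + 1 < j)).sup (fun i => (σ i : ℕ)) =
        (Finset.univ.filter (fun i : Fin n => (i : ℕ) < M)).sup (fun i => (σ i : ℕ)))) =
      (1 - q) * q ^ (n - j) / (1 - q ^ n) *
        (q ^ (j - 1 - M) * (1 - q ^ M) / (1 - q ^ (j - 1))) := by
  classical
  obtain ⟨hq0, hq1⟩ := hq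
  obtain ⟨m, rfl⟩ : ∃ m, n = m + 1 := ⟨n - 1, by omega⟩
  obtain ⟨k, rfl⟩ : ∃ k, j = k + 1 := ⟨j - 1, by omega⟩
  have hZ : mallowsZ m q ≠ 0 :=
    (Finset.sum_pos (fun σ _ => pow_pos hq0 _) Finset.univ_nonempty).ne'
  have hZ' : mallowsZ (m+1) q ≠ 0 :=
    (Finset.sum_pos (fun σ _ => pow_pos hq0 _) Finset.univ_nonempty).ne'
  have hk0 : (1 - q ^ k) ≠ 0 := by
    have := pow_lt_one₀ hq0.le hq1 (show k ≠ 0 by omega)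
    linarith
  have hm0 : (1 - q ^ (m+1)) ≠ 0 := by
    have := pow_lt_one₀ hq0.le hq1 (show m + 1 ≠ 0 by omega)
    linarith
  have hnum : ∑ σ ∈ Finset.univ.filter (fun σ : Equiv.Perm (Fin (m+1)) =>
        (∃ i : Fin (m+1), (i : ℕ) + 1 = k + 1 ∧ (σ i : ℕ) = m + 1 - 1) ∧
        (Finset.univ.filter (fun i : Fin (m+1) => (i : ℕ) + 1 < k + 1)).sup
          (fun i => (σ i : ℕ)) =
        (Finset.univ.filter (fun i : Fin (m+1) => (i : ℕ) < M)).sup (fun i => (σ i : ℕ))),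
        q ^ invCount (m+1) σ = q ^ (m - k) * evSum m k M q := by
    simp only [Nat.add_lt_add_iff_right, Nat.add_right_cancel_iff, Nat.add_sub_cancel,
      evMax_iff (m+1) k M hM (by omega) (by omega)]
    rw [Finset.sum_filter, sum_insPerm, Finset.sum_eq_single (⟨k, by omega⟩ : Fin (m+1))]
    · rw [evSum, Finset.mul_sum]
      refine Finset.sum_congr rfl fun τ _ => ?_
      have h1 : ∃ i : Fin (m+1), (i : ℕ) = k ∧
          (insPerm m ⟨k, by omega⟩ τ i : ℕ) = m := ⟨⟨k, by omega⟩, rfl, by simp [insPerm_at]⟩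
      simp only [h1, true_and, evMax_ins_ge m k M (by omega) ⟨k, by omega⟩ le_rfl,
        invCount_insPerm, pow_add, mul_ite, mul_zero]
    · intro p _ hp
      refine Finset.sum_eq_zero fun τ _ => ?_
      rw [if_neg]
      rintro ⟨⟨i, hi, h2⟩, -⟩
      apply hp
      have h3 : insPerm m p τ i = insPerm m p τ p := by
        rw [insPerm_at]; exact Fin.ext h2
      have h4 := (insPerm m p τ).injective h3
      rw [← h4]
      exact Fin.ext hi
    · simp
  rw [mallowsProb, hnum]
  have h1 := evSum_eq k M hM (by omega) q hq1 m (by omega)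
  have h2 := mallowsZ_rec m q
  rw [show m + 1 - (k + 1) = m - k by omega, Nat.add_sub_cancel, div_mul_div_comm,
    div_eq_div_iff hZ' (mul_ne_zero hm0 hk0)]
  linear_combination q ^ (m - k) * (1 - q ^ (m+1)) * h1
    - q ^ (m-k) * q ^ (k - M) * (1 - q ^ M) * h2
end

section
/- For every c > 0, with b*(c) = (1/c) log(1 + (e^c − 1)/e) and H(b) = (e^{bc} − 1)(1 − b + (1/c) log((1 − e^{−c})/(1 − e^{−bc}))), one has H(b*(c)) = (e^c − 1)/(e·c); consequently (c e^{−c}/(1 − e^{−c})) · H(b*(c)) = 1/e. -/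
theorem stmt_19 (c : ℝ) (hc : 0 < c) :
    let H : ℝ → ℝ := fun b => (Real.exp (b * c) - 1) *
      (1 - b + (1 / c) * Real.log ((1 - Real.exp (-c)) / (1 - Real.exp (-(b * c)))))
    let bstar : ℝ := (1 / c) * Real.log (1 + (Real.exp c - 1) / Real.exp 1)
    H bstar = (Real.exp c - 1) / (Real.exp 1 * c) ∧
      c * Real.exp (-c) / (1 - Real.exp (-c)) * H bstar = (Real.exp 1)⁻¹ := by
  intro H bstar
  have hE : 1 < Real.exp c := Real.one_lt_exp_iff.mpr hc
  have hE1 : Real.exp c - 1 ≠ 0 := by linarith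
  have he : 0 < Real.exp 1 := Real.exp_pos 1
  have hXpos : 0 < 1 + (Real.exp c - 1) / Real.exp 1 := by
    have : 0 < (Real.exp c - 1) / Real.exp 1 := div_pos (by linarith) he
    linarith
  have hc0 : c ≠ 0 := hc.ne'
  have hbc : bstar * c = Real.log (1 + (Real.exp c - 1) / Real.exp 1) := by
    simp only [bstar]; field_simp
  have hX : Real.exp (bstar * c) = 1 + (Real.exp c - 1) / Real.exp 1 := by
    rw [hbc, Real.exp_log hXpos]
  have hratio : (1 - Real.exp (-c)) / (1 - Real.exp (-(bstar * c)))
      = Real.exp (1 + bstar * c - c) := by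
    rw [Real.exp_sub, Real.exp_add, Real.exp_neg, Real.exp_neg]
    have hX0 : Real.exp (bstar * c) ≠ 0 := (Real.exp_pos _).ne'
    have hEX : Real.exp c - 1 = Real.exp 1 * (Real.exp (bstar * c) - 1) := by
      rw [hX]; field_simp; ring
    have hX1 : Real.exp (bstar * c) - 1 ≠ 0 := by
      intro h; rw [h, mul_zero] at hEX; exact hE1 hEX
    have h1 : 1 - (Real.exp c)⁻¹ = (Real.exp c - 1) / Real.exp c := by
      field_simp
    have h2 : 1 - (Real.exp (bstar * c))⁻¹
        = (Real.exp (bstar * c) - 1) / Real.exp (bstar * c) := by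
      field_simp
    rw [h1, h2, hEX]
    generalize Real.exp (bstar * c) = X at *
    field_simp
  have hH : H bstar = (Real.exp c - 1) / (Real.exp 1 * c) := by
    simp only [H]
    rw [hratio, Real.log_exp, hX]
    field_simp
    ring
  refine ⟨hH, ?_⟩
  rw [hH, Real.exp_neg]
  have h1 : 1 - (Real.exp c)⁻¹ = (Real.exp c - 1) / Real.exp c := by
    field_simp
  rw [h1]
  field_simp
end
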